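/- Let V : ℝ³ → ℝ be measurable with V ∈ L^{3/2,1}(ℝ³). Suppose φ : ℝ³ → ℂ is measurable with φ ∈ L^{3,∞}(ℝ³) and satisfies, for a.e. x ∈ ℝ³, that y ↦ V(y)φ(y)/‖x−y‖ is integrable and φ(x) = −(1/(4π)) ∫_{ℝ³} V(y)φ(y)/‖x−y‖ dy. Then φ is essentially bounded, i.e. φ ∈ L^∞(ℝ³). -/

import Mathlib

open MeasureTheory ENNReal

/-- `ℝ³` as a Euclidean space. -/
abbrev E3 := EuclideanSpace ℝ (Fin 3)

/-- The quantity `∫₀^∞ (vol{x : |f x| > λ})^{2/3} dλ`, an equivalent characterization of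
the Lorentz `L^{3/2,1}` norm. -/
noncomputable def lorentzNorm321 {α : Type*} [NormedAddCommGroup α] (f : E3 → α) : ℝ≥0∞ :=
  ∫⁻ lam in Set.Ioi (0 : ℝ), (volume {x : E3 | lam < ‖f x‖}) ^ ((2 : ℝ) / 3)

/-- A function belongs to the Lorentz space `L^{3/2,1}(ℝ³)`. -/
def MemL321 {α : Type*} [NormedAddCommGroup α] (f : E3 → α) : Prop :=
  lorentzNorm321 f < ⊤

/-- The weak-`L³` quasinorm `sup_{λ>0} λ·(vol{x : |f x| > λ})^{1/3}`. -/
noncomputable def weakL3Norm {α : Type*} [NormedAddCommGroup α] (f : E3 → α) : ℝ≥0∞ :=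
  ⨆ (lam : ℝ) (_ : 0 < lam),
    ENNReal.ofReal lam * (volume {x : E3 | lam < ‖f x‖}) ^ ((1 : ℝ) / 3)

/-- A function belongs to weak-`L³(ℝ³)`, i.e. `L^{3,∞}`. -/
def MemWeakL3 {α : Type*} [NormedAddCommGroup α] (f : E3 → α) : Prop :=
  weakL3Norm f < ⊤

/-!
Split `V = V 1_S + V 1_{Sᶜ}`, where `V` is bounded on the finite-measure set `S` and `V 1_{Sᶜ}` is
small in `L^{3/2,1}`. Since `1_S φ ∈ L^{3/2,1}` and the kernels `1 / ‖x - ·‖` are uniformly bounded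
in the dual space `L^{3,∞}`, the first part contributes a bounded function to `φ`. The second part
acts as a contraction, both in `L^∞` and in `L¹`, with respect to the measure `|V 1_{Sᶜ}| dx`, for
which `φ` is integrable by Hölder. Hence the excess `(|φ| - M)⁺` over a suitable constant `M` is
dominated by its own image under an `L¹` contraction, and vanishes.
-/

open Filter Set Topology

section Lorentz

variable {X E F : Type*} [MeasurableSpace X] {μ : Measure X}
  [NormedAddCommGroup E] [NormedAddCommGroup F] {f : X → E} {g : X → F} {p q : ℝ} {S : Set X}

/-- The quantity `∫₀^∞ μ{‖f‖ > t}^{1/p} dt`, equal to the Lorentz `L^{p,1}` quasinorm up to the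
factor `p`. It is meant for `0 < p < ∞`. -/
noncomputable def lorentzOneNorm (f : X → E) (p : ℝ) (μ : Measure X) : ℝ≥0∞ :=
  ∫⁻ t in Ioi (0 : ℝ), μ {x | t < ‖f x‖} ^ (1 / p)

/-- The weak-`Lᵖ` quasinorm `sup_{t>0} t μ{‖f‖ > t}^{1/p}`, that is, the Lorentz `L^{p,∞}`
quasinorm. It is meant for `0 < p < ∞`. -/
noncomputable def weakLpNorm (f : X → E) (p : ℝ) (μ : Measure X) : ℝ≥0∞ :=
  ⨆ (t : ℝ) (_ : 0 < t), ENNReal.ofReal t * μ {x | t < ‖f x‖} ^ (1 / p)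

lemma antitone_measure_lt_norm_rpow {r : ℝ} (hr : 0 ≤ r) :
    Antitone fun t : ℝ => μ {x | t < ‖f x‖} ^ r := fun _ _ hst =>
  ENNReal.rpow_le_rpow (measure_mono fun _ hx => hst.trans_lt hx) hr

lemma ofReal_mul_measure_rpow_le_weakLpNorm {t : ℝ} (ht : 0 < t) :
    ENNReal.ofReal t * μ {x | t < ‖f x‖} ^ (1 / p) ≤ weakLpNorm f p μ :=
  le_iSup₂_of_le (f := fun t (_ : 0 < t) => ENNReal.ofReal t * μ {x | t < ‖f x‖} ^ (1 / p))
    t ht le_rfl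

lemma measure_rpow_le_weakLpNorm_div {t : ℝ} (ht : 0 < t) :
    μ {x | t < ‖f x‖} ^ (1 / p) ≤ weakLpNorm f p μ / ENNReal.ofReal t := by
  rw [ENNReal.le_div_iff_mul_le (.inl (by simpa using ht)) (.inl ofReal_ne_top), mul_comm]
  exact ofReal_mul_measure_rpow_le_weakLpNorm ht

lemma weakLpNorm_le_lorentzOneNorm (hp : 0 ≤ p) : weakLpNorm f p μ ≤ lorentzOneNorm f p μ := by
  refine iSup₂_le fun t _ => ?_
  calc ENNReal.ofReal t * μ {x | t < ‖f x‖} ^ (1 / p)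
      = ∫⁻ _ in Ioc 0 t, μ {x | t < ‖f x‖} ^ (1 / p) := by
        rw [setLIntegral_const, Real.volume_Ioc, sub_zero, mul_comm]
    _ ≤ ∫⁻ s in Ioc 0 t, μ {x | s < ‖f x‖} ^ (1 / p) :=
        setLIntegral_mono' measurableSet_Ioc fun s hs =>
          antitone_measure_lt_norm_rpow (by positivity) hs.2
    _ ≤ lorentzOneNorm f p μ := lintegral_mono_set Ioc_subset_Ioi_self

lemma measure_lt_norm_ne_top (hp : 0 < p) (hf : weakLpNorm f p μ ≠ ⊤) {t : ℝ} (ht : 0 < t) :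
    μ {x | t < ‖f x‖} ≠ ⊤ := by
  have h : μ {x | t < ‖f x‖} ^ (1 / p) ≠ ⊤ :=
    ne_top_of_le_ne_top (ENNReal.div_ne_top hf (by simpa using ht))
      (measure_rpow_le_weakLpNorm_div ht)
  contrapose! h
  rw [h, ENNReal.top_rpow_of_pos (by positivity)]

lemma measure_lt_norm_eq_zero (hp : 0 < p) (hf : weakLpNorm f p μ = 0) {t : ℝ} (ht : 0 < t) :
    μ {x | t < ‖f x‖} = 0 := by
  have h := measure_rpow_le_weakLpNorm_div (μ := μ) (f := f) (p := p) ht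
  rwa [hf, ENNReal.zero_div, nonpos_iff_eq_zero, ENNReal.rpow_eq_zero_iff_of_pos (by positivity)]
    at h

lemma lorentzOneNorm_eq_zero (hp : 0 < p) (hf : ∀ t > 0, μ {x | t < ‖f x‖} = 0) :
    lorentzOneNorm f p μ = 0 := by
  rw [lorentzOneNorm, setLIntegral_congr_fun (g := 0) measurableSet_Ioi]
  · simp
  · intro t ht
    simp [hf t ht, hp]

lemma lintegral_enorm_eq_lorentzOneNorm (hf : AEStronglyMeasurable f μ) :
    ∫⁻ x, ‖f x‖ₑ ∂μ = lorentzOneNorm f 1 μ := by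
  simp_rw [lorentzOneNorm, div_one, ENNReal.rpow_one, ← ofReal_norm]
  exact lintegral_eq_lintegral_meas_lt μ (.of_forall fun _ => norm_nonneg _)
    hf.norm.aemeasurable

lemma lintegral_Ioi_ofReal_div_rpow {s r : ℝ} (hs : 0 < s) (hr : 1 < r) :
    ∫⁻ t in Ioi s, ENNReal.ofReal ((s / t) ^ r) = ENNReal.ofReal (s / (r - 1)) := by
  have hpow : EqOn (fun t => ENNReal.ofReal ((s / t) ^ r))
      (fun t => ENNReal.ofReal (s ^ r * t ^ (-r))) (Ioi s) := fun t ht => by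
    have ht0 : 0 ≤ t := (hs.trans ht).le
    simp only [Real.div_rpow hs.le ht0, Real.rpow_neg ht0]
    rw [div_eq_mul_inv]
  rw [setLIntegral_congr_fun measurableSet_Ioi hpow, ← ofReal_integral_eq_lintegral_ofReal,
    integral_const_mul, integral_Ioi_rpow_of_lt (by linarith) hs]
  · rw [← neg_div_neg_eq, neg_neg, mul_div_assoc', ← Real.rpow_add hs, add_neg_cancel_left,
      Real.rpow_one, neg_add', neg_neg]
  · exact (integrableOn_Ioi_rpow_of_lt (by linarith) hs).const_mul _
  · filter_upwards [ae_restrict_mem measurableSet_Ioi] with t ht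
    have : 0 < t := hs.trans ht
    positivity

lemma lintegral_Ioi_le_of_le_of_le_rpow {φ : ℝ → ℝ≥0∞} {a : ℝ≥0∞} {s r : ℝ} (hs : 0 < s)
    (hr : 1 < r) (hφ : ∀ t > 0, φ t ≤ a)
    (hφ' : ∀ t > 0, φ t ≤ a * ENNReal.ofReal ((s / t) ^ r)) :
    ∫⁻ t in Ioi 0, φ t ≤ ENNReal.ofReal (r / (r - 1)) * (ENNReal.ofReal s * a) := by
  have hr' : 0 < r - 1 := sub_pos.2 hr
  have hhead : ∫⁻ t in Ioc 0 s, φ t ≤ a * ENNReal.ofReal s :=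
    (setLIntegral_mono' measurableSet_Ioc fun t ht => hφ t ht.1).trans_eq
      (by rw [setLIntegral_const, Real.volume_Ioc, sub_zero])
  have htail : ∫⁻ t in Ioi s, φ t ≤ a * ENNReal.ofReal (s / (r - 1)) := by
    rw [← lintegral_Ioi_ofReal_div_rpow hs hr, ← lintegral_const_mul _ (by fun_prop)]
    exact setLIntegral_mono' measurableSet_Ioi fun t ht => hφ' t (hs.trans ht)
  calc ∫⁻ t in Ioi 0, φ t = (∫⁻ t in Ioc 0 s, φ t) + ∫⁻ t in Ioi s, φ t := by
        rw [← lintegral_union measurableSet_Ioi (Ioc_disjoint_Ioi le_rfl),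
          Ioc_union_Ioi_eq_Ioi hs.le]
    _ ≤ a * ENNReal.ofReal s + a * ENNReal.ofReal (s / (r - 1)) := add_le_add hhead htail
    _ = ENNReal.ofReal (r / (r - 1)) * (ENNReal.ofReal s * a) := by
        rw [← mul_add, ← ENNReal.ofReal_add hs.le (by positivity), mul_left_comm, mul_comm _ a,
          mul_left_comm, ← mul_assoc, mul_assoc, ← ENNReal.ofReal_mul (by positivity)]
        congr 2
        field_simp
        ring

lemma measure_lt_norm_indicator_le {t : ℝ} (ht : 0 < t) :
    μ {x | t < ‖S.indicator g x‖} ≤ μ S := by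
  refine measure_mono fun x hx => ?_
  by_contra hxS
  rw [mem_ofPred_eq, indicator_of_notMem hxS, norm_zero] at hx
  exact hx.not_gt ht

lemma measure_rpow_le_weakLpNorm_div_rpow (hq : 0 < q) (hp : 0 ≤ p) {t : ℝ} (ht : 0 < t) :
    μ {x | t < ‖g x‖} ^ (1 / p) ≤ (weakLpNorm g q μ / ENNReal.ofReal t) ^ (q / p) :=
  calc μ {x | t < ‖g x‖} ^ (1 / p) = (μ {x | t < ‖g x‖} ^ (1 / q)) ^ (q / p) := by
        rw [← ENNReal.rpow_mul, one_div_mul_eq_div, div_right_comm, div_self hq.ne']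
    _ ≤ (weakLpNorm g q μ / ENNReal.ofReal t) ^ (q / p) :=
        ENNReal.rpow_le_rpow (measure_rpow_le_weakLpNorm_div ht) (by positivity)

lemma lorentzOneNorm_indicator_le_of_ne_top (hp : 0 < p) (hpq : p < q) (hS : μ S ≠ 0)
    (hS' : μ S ≠ ⊤) (hg : weakLpNorm g q μ ≠ 0) (hg' : weakLpNorm g q μ ≠ ⊤) :
    lorentzOneNorm (S.indicator g) p μ ≤
      ENNReal.ofReal (q / (q - p)) * (weakLpNorm g q μ * μ S ^ (1 / p - 1 / q)) := by
  have hq : 0 < q := hp.trans hpq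
  -- `μ S` and `(weakLpNorm g q μ / t) ^ q`, the two bounds for `μ {‖1_S g‖ > t}`, agree at `t = s`.
  obtain ⟨s, hs, hs'⟩ : ∃ s : ℝ, 0 < s ∧
      ENNReal.ofReal s = weakLpNorm g q μ * μ S ^ (-(1 / q)) := by
    have h0 : weakLpNorm g q μ * μ S ^ (-(1 / q)) ≠ 0 :=
      mul_ne_zero hg (by simp [ENNReal.rpow_eq_zero_iff, hS, hS'])
    have htop : weakLpNorm g q μ * μ S ^ (-(1 / q)) ≠ ⊤ :=
      ENNReal.mul_ne_top hg' (by simp [ENNReal.rpow_eq_top_iff, hS, hS'])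
    exact ⟨_, ENNReal.toReal_pos h0 htop, ENNReal.ofReal_toReal htop⟩
  have hweak : weakLpNorm g q μ = ENNReal.ofReal s * μ S ^ (1 / q) := by
    rw [hs', mul_assoc, ← ENNReal.rpow_add _ _ hS hS', neg_add_cancel, ENNReal.rpow_zero, mul_one]
  have hflat : ∀ t > 0, μ {x | t < ‖S.indicator g x‖} ^ (1 / p) ≤ μ S ^ (1 / p) := fun t ht =>
    ENNReal.rpow_le_rpow (measure_lt_norm_indicator_le ht) (by positivity)
  have hdecay : ∀ t > 0, μ {x | t < ‖S.indicator g x‖} ^ (1 / p) ≤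
      μ S ^ (1 / p) * ENNReal.ofReal ((s / t) ^ (q / p)) := fun t ht =>
    calc μ {x | t < ‖S.indicator g x‖} ^ (1 / p) ≤ μ {x | t < ‖g x‖} ^ (1 / p) :=
          ENNReal.rpow_le_rpow (measure_mono fun x (hx : t < ‖S.indicator g x‖) =>
            hx.trans_le (norm_indicator_le_norm_self g x)) (by positivity)
      _ ≤ (weakLpNorm g q μ / ENNReal.ofReal t) ^ (q / p) :=
          measure_rpow_le_weakLpNorm_div_rpow hq hp.le ht
      _ = (μ S ^ (1 / q) * ENNReal.ofReal (s / t)) ^ (q / p) := by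
          rw [hweak, ENNReal.ofReal_div_of_pos ht, mul_comm, mul_div_assoc]
      _ = μ S ^ (1 / p) * ENNReal.ofReal ((s / t) ^ (q / p)) := by
          rw [ENNReal.mul_rpow_of_nonneg _ _ (by positivity), ← ENNReal.rpow_mul,
            one_div_mul_eq_div, div_right_comm, div_self hq.ne',
            ENNReal.ofReal_rpow_of_pos (by positivity)]
  calc lorentzOneNorm (S.indicator g) p μ
      ≤ ENNReal.ofReal (q / p / (q / p - 1)) * (ENNReal.ofReal s * μ S ^ (1 / p)) :=
        lintegral_Ioi_le_of_le_of_le_rpow hs ((one_lt_div hp).2 hpq) hflat hdecay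
    _ = ENNReal.ofReal (q / (q - p)) * (weakLpNorm g q μ * μ S ^ (1 / p - 1 / q)) := by
        rw [div_sub_one hp.ne', div_div_div_cancel_right₀ hp.ne', hs', mul_assoc,
          ← ENNReal.rpow_add _ _ hS hS', neg_add_eq_sub]

lemma lorentzOneNorm_indicator_le (hp : 0 < p) (hpq : p < q) :
    lorentzOneNorm (S.indicator g) p μ ≤
      ENNReal.ofReal (q / (q - p)) * (weakLpNorm g q μ * μ S ^ (1 / p - 1 / q)) := by
  have hq : 0 < q := hp.trans hpq
  have hC : ENNReal.ofReal (q / (q - p)) ≠ 0 := by simp [div_pos hq (sub_pos.2 hpq)]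
  have hexp : 0 < 1 / p - 1 / q := sub_pos.2 (one_div_lt_one_div_of_lt hp hpq)
  rcases eq_or_ne (μ S) 0 with hS | hS
  · rw [lorentzOneNorm_eq_zero hp fun t ht =>
      nonpos_iff_eq_zero.1 ((measure_lt_norm_indicator_le ht).trans_eq hS)]
    exact zero_le
  rcases eq_or_ne (weakLpNorm g q μ) 0 with hg | hg
  · rw [lorentzOneNorm_eq_zero hp fun t ht => measure_mono_null
      (fun x (hx : t < ‖S.indicator g x‖) => hx.trans_le (norm_indicator_le_norm_self g x))
      (measure_lt_norm_eq_zero hq hg ht)]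
    exact zero_le
  rcases eq_or_ne (μ S) ⊤ with hS' | hS'
  · rw [hS', ENNReal.top_rpow_of_pos hexp, ENNReal.mul_top hg, ENNReal.mul_top hC]
    exact le_top
  rcases eq_or_ne (weakLpNorm g q μ) ⊤ with hg' | hg'
  · have : μ S ^ (1 / p - 1 / q) ≠ 0 := by simp [ENNReal.rpow_eq_zero_iff, hS, hS']
    rw [hg', ENNReal.top_mul this, ENNReal.mul_top hC]
    exact le_top
  exact lorentzOneNorm_indicator_le_of_ne_top hp hpq hS hS' hg hg'

lemma lorentzOneNorm_indicator_ne_top (hp : 0 < p) (hpq : p < q) (hg : weakLpNorm g q μ ≠ ⊤)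
    (hS : μ S ≠ ⊤) : lorentzOneNorm (S.indicator g) p μ ≠ ⊤ := by
  have hexp : 0 ≤ 1 / p - 1 / q := sub_nonneg.2 (one_div_le_one_div_of_le hp hpq.le)
  exact ne_top_of_le_ne_top (ENNReal.mul_ne_top ofReal_ne_top
    (ENNReal.mul_ne_top hg (ENNReal.rpow_ne_top_of_nonneg hexp hS)))
    (lorentzOneNorm_indicator_le hp hpq)

lemma setLIntegral_enorm_le_weakLpNorm (hpq : p.HolderConjugate q)
    (hg : AEStronglyMeasurable g μ) (hS : NullMeasurableSet S μ) :
    ∫⁻ x in S, ‖g x‖ₑ ∂μ ≤ ENNReal.ofReal p * weakLpNorm g q μ * μ S ^ (1 / p) :=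
  calc ∫⁻ x in S, ‖g x‖ₑ ∂μ = lorentzOneNorm (S.indicator g) 1 μ := by
        rw [← lintegral_indicator₀ hS, ← lintegral_enorm_eq_lorentzOneNorm (hg.indicator₀ hS)]
        simp_rw [enorm_indicator_eq_indicator_enorm]
    _ ≤ ENNReal.ofReal (q / (q - 1)) * (weakLpNorm g q μ * μ S ^ (1 / 1 - 1 / q)) :=
        lorentzOneNorm_indicator_le one_pos hpq.symm.lt
    _ = ENNReal.ofReal p * weakLpNorm g q μ * μ S ^ (1 / p) := by
        rw [← hpq.symm.conjugate_eq, one_div_one, one_div q, hpq.symm.one_sub_inv, one_div p,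
          mul_assoc]

lemma lintegral_enorm_mul_enorm_le_weakLpNorm_mul_lorentzOneNorm (hpq : p.HolderConjugate q)
    (hf : AEStronglyMeasurable f μ) (hg : AEStronglyMeasurable g μ) :
    ∫⁻ x, ‖f x‖ₑ * ‖g x‖ₑ ∂μ ≤
      ENNReal.ofReal p * weakLpNorm g q μ * lorentzOneNorm f p μ := by
  calc ∫⁻ x, ‖f x‖ₑ * ‖g x‖ₑ ∂μ = ∫⁻ x, ‖f x‖ₑ ∂μ.withDensity (fun x => ‖g x‖ₑ) := by
        rw [lintegral_withDensity_eq_lintegral_mul₀ hg.enorm hf.enorm]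
        simp_rw [Pi.mul_apply, mul_comm]
    _ = ∫⁻ t in Ioi (0 : ℝ), μ.withDensity (fun x => ‖g x‖ₑ) {x | t < ‖f x‖} := by
        rw [lintegral_enorm_eq_lorentzOneNorm
          (hf.mono_ac (withDensity_absolutelyContinuous _ _))]
        simp_rw [lorentzOneNorm, div_one, ENNReal.rpow_one]
    _ ≤ ∫⁻ t in Ioi (0 : ℝ),
        ENNReal.ofReal p * weakLpNorm g q μ * μ {x | t < ‖f x‖} ^ (1 / p) := by
        refine lintegral_mono fun t => ?_
        have ht : NullMeasurableSet {x | t < ‖f x‖} μ :=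
          nullMeasurableSet_lt aemeasurable_const hf.norm.aemeasurable
        rw [withDensity_apply₀ _ ht]
        exact setLIntegral_enorm_le_weakLpNorm hpq hg ht
    _ = ENNReal.ofReal p * weakLpNorm g q μ * lorentzOneNorm f p μ :=
        lintegral_const_mul _ (antitone_measure_lt_norm_rpow hpq.one_div_nonneg).measurable

lemma lintegral_enorm_withDensity_enorm_le (hpq : p.HolderConjugate q)
    (hf : AEStronglyMeasurable f μ) (hg : AEStronglyMeasurable g μ) :
    ∫⁻ x, ‖g x‖ₑ ∂μ.withDensity (fun x => ‖f x‖ₑ) ≤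
      ENNReal.ofReal p * weakLpNorm g q μ * lorentzOneNorm f p μ := by
  rw [lintegral_withDensity_eq_lintegral_mul₀ hf.enorm hg.enorm]
  exact lintegral_enorm_mul_enorm_le_weakLpNorm_mul_lorentzOneNorm hpq hf hg

lemma tendsto_measure_lt_norm_zero_of_dominated {F : ℕ → X → E} {t : ℝ} (ht : 0 < t)
    (hF : ∀ n, AEStronglyMeasurable (F n) μ) (hg : μ {x | t < ‖g x‖} ≠ ⊤)
    (hFg : ∀ n, ∀ᵐ x ∂μ, ‖F n x‖ ≤ ‖g x‖) (hlim : ∀ᵐ x ∂μ, Tendsto (F · x) atTop (𝓝 0)) :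
    Tendsto (fun n => μ {x | t < ‖F n x‖}) atTop (𝓝 0) := by
  set B := {x | t < ‖g x‖}
  have : IsFiniteMeasure (μ.restrict B) := ⟨by simpa using hg.lt_top⟩
  have hB := tendstoInMeasure_iff_norm.1 (tendstoInMeasure_of_tendsto_ae (g := 0)
    (fun n => (hF n).restrict (s := B)) (ae_restrict_of_ae hlim)) t ht
  refine tendsto_of_tendsto_of_tendsto_of_le_of_le tendsto_const_nhds hB (fun _ => zero_le)
    fun n => ?_
  calc μ {x | t < ‖F n x‖} ≤ μ ({x | t ≤ ‖F n x - 0‖} ∩ B) := by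
        refine measure_mono_ae ?_
        filter_upwards [hFg n] with x hx (hxt : t < ‖F n x‖)
        exact ⟨by simpa using hxt.le, hxt.trans_le hx⟩
    _ ≤ μ.restrict B {x | t ≤ ‖F n x - 0‖} := Measure.le_restrict_apply _ _

lemma tendsto_lorentzOneNorm_zero_of_dominated (hp : 0 < p) {F : ℕ → X → E}
    (hF : ∀ n, AEStronglyMeasurable (F n) μ) (hg : lorentzOneNorm g p μ ≠ ⊤)
    (hFg : ∀ n, ∀ᵐ x ∂μ, ‖F n x‖ ≤ ‖g x‖) (hlim : ∀ᵐ x ∂μ, Tendsto (F · x) atTop (𝓝 0)) :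
    Tendsto (fun n => lorentzOneNorm (F n) p μ) atTop (𝓝 0) := by
  have hp' : 0 < 1 / p := by positivity
  rw [← lintegral_zero (μ := volume.restrict (Ioi (0 : ℝ)))]
  refine tendsto_lintegral_of_dominated_convergence (fun t => μ {x | t < ‖g x‖} ^ (1 / p))
    (fun n => (antitone_measure_lt_norm_rpow hp'.le).measurable) (fun n => ?_) hg ?_
  · refine .of_forall fun t => ENNReal.rpow_le_rpow (measure_mono_ae ?_) hp'.le
    filter_upwards [hFg n] with x hx (hxt : t < ‖F n x‖)
    exact hxt.trans_le hx
  · filter_upwards [ae_restrict_mem measurableSet_Ioi] with t ht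
    have hgt : μ {x | t < ‖g x‖} ≠ ⊤ :=
      measure_lt_norm_ne_top hp (ne_top_of_le_ne_top hg (weakLpNorm_le_lorentzOneNorm hp.le)) ht
    have htend :=
      (tendsto_measure_lt_norm_zero_of_dominated ht hF hgt hFg hlim).ennrpow_const (1 / p)
    rwa [ENNReal.zero_rpow_of_pos hp'] at htend

lemma exists_lorentzOneNorm_indicator_compl_lt (hp : 0 < p) (hf : AEStronglyMeasurable f μ)
    (hf' : lorentzOneNorm f p μ ≠ ⊤) {ε : ℝ≥0∞} (hε : 0 < ε) :
    ∃ (S : Set X) (n : ℕ), NullMeasurableSet S μ ∧ μ S ≠ ⊤ ∧ (∀ x ∈ S, ‖f x‖ₑ ≤ n) ∧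
      lorentzOneNorm (Sᶜ.indicator f) p μ < ε := by
  let S (n : ℕ) : Set X := {x | 1 / ((n : ℝ) + 1) < ‖f x‖} ∩ {x | ‖f x‖ ≤ n}
  have hS (n : ℕ) : NullMeasurableSet (S n) μ :=
    (nullMeasurableSet_lt aemeasurable_const hf.norm.aemeasurable).inter
      (nullMeasurableSet_le hf.norm.aemeasurable aemeasurable_const)
  have hS' (n : ℕ) : μ (S n) ≠ ⊤ :=
    measure_ne_top_of_subset inter_subset_left <| measure_lt_norm_ne_top hp
      (ne_top_of_le_ne_top hf' (weakLpNorm_le_lorentzOneNorm hp.le)) (by positivity)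
  have hlim (x : X) : Tendsto (fun n => (S n)ᶜ.indicator f x) atTop (𝓝 0) := by
    refine tendsto_const_nhds.congr' ?_
    rcases eq_or_ne (f x) 0 with hx | hx
    · exact .of_forall fun n => (indicator_apply_eq_zero.2 fun _ => hx).symm
    · filter_upwards
        [tendsto_one_div_add_atTop_nhds_zero_nat.eventually_lt_const (norm_pos_iff.2 hx),
        tendsto_natCast_atTop_atTop.eventually_ge_atTop ‖f x‖] with n hn hn'
      have hxS : x ∈ S n := ⟨hn, hn'⟩
      exact (indicator_of_notMem (notMem_compl_iff.2 hxS) f).symm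
  obtain ⟨n, hn⟩ := ((tendsto_lorentzOneNorm_zero_of_dominated hp
    (fun n => hf.indicator₀ (hS n).compl) hf'
    (fun n => .of_forall fun x => norm_indicator_le_norm_self f x)
    (.of_forall hlim)).eventually_lt_const hε).exists
  refine ⟨S n, n, hS n, hS' n, fun x hx => ?_, hn⟩
  simpa [← ofReal_norm] using ENNReal.ofReal_le_ofReal hx.2

end Lorentz

lemma weakLpNorm_inv_norm_sub_le {E : Type*} [NormedAddCommGroup E] [NormedSpace ℝ E]
    [FiniteDimensional ℝ E] [Nontrivial E] [MeasurableSpace E] [BorelSpace E] (μ : Measure E)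
    [μ.IsAddHaarMeasure] (x : E) :
    weakLpNorm (fun y => ‖x - y‖⁻¹) (Module.finrank ℝ E) μ ≤
      μ (Metric.ball 0 1) ^ (1 / (Module.finrank ℝ E : ℝ)) := by
  have hd : (Module.finrank ℝ E : ℝ) ≠ 0 := by simp [Module.finrank_pos.ne']
  refine iSup₂_le fun t ht => ?_
  have hball : {y | t < ‖(‖x - y‖⁻¹ : ℝ)‖} ⊆ Metric.ball x t⁻¹ := fun y hy => by
    rw [mem_ofPred_eq, norm_inv, norm_norm] at hy
    rw [Metric.mem_ball', dist_eq_norm]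
    exact (lt_inv_comm₀ (inv_pos.1 (ht.trans hy)) ht).2 hy
  calc ENNReal.ofReal t * μ {y | t < ‖(‖x - y‖⁻¹ : ℝ)‖} ^ (1 / (Module.finrank ℝ E : ℝ))
      ≤ ENNReal.ofReal t * (ENNReal.ofReal t⁻¹ ^ (Module.finrank ℝ E : ℝ) *
          μ (Metric.ball 0 1)) ^ (1 / (Module.finrank ℝ E : ℝ)) := by
        gcongr
        rw [ENNReal.rpow_natCast, ← ENNReal.ofReal_pow (by positivity),
          ← Measure.addHaar_ball μ x (by positivity)]
        exact measure_mono hball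
    _ = μ (Metric.ball 0 1) ^ (1 / (Module.finrank ℝ E : ℝ)) := by
        rw [ENNReal.mul_rpow_of_nonneg _ _ (by positivity), ← ENNReal.rpow_mul,
          mul_one_div_cancel hd, ENNReal.rpow_one, ← mul_assoc, ← ENNReal.ofReal_mul ht.le,
          mul_inv_cancel₀ ht.ne', ENNReal.ofReal_one, one_mul]

section Absorption

variable {X : Type*} [MeasurableSpace X]

lemma ae_eq_zero_of_le_lintegral_mul {μ ν : Measure X} [SFinite ν] (hνμ : ν ≪ μ)
    {k : X → X → ℝ≥0∞} (hk : Measurable (Function.uncurry k)) {c : ℝ≥0∞} (hc : c < 1)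
    (hcol : ∀ y, ∫⁻ x, k x y ∂ν ≤ c) {v : X → ℝ≥0∞} (hv : AEMeasurable v ν)
    (hv' : ∫⁻ x, v x ∂ν ≠ ⊤) (h : ∀ᵐ x ∂μ, v x ≤ ∫⁻ y, k x y * v y ∂ν) : v =ᵐ[μ] 0 := by
  have hcontract : ∫⁻ x, v x ∂ν ≤ c * ∫⁻ x, v x ∂ν := by
    calc ∫⁻ x, v x ∂ν ≤ ∫⁻ x, ∫⁻ y, k x y * v y ∂ν ∂ν := lintegral_mono_ae (hνμ.ae_le h)
      _ = ∫⁻ y, ∫⁻ x, k x y * v y ∂ν ∂ν := lintegral_lintegral_swap <| hk.aemeasurable.mul <|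
          hv.comp_quasiMeasurePreserving Measure.quasiMeasurePreserving_snd
      _ = ∫⁻ y, (∫⁻ x, k x y ∂ν) * v y ∂ν :=
          lintegral_congr fun y => lintegral_mul_const _ hk.of_uncurry_right
      _ ≤ ∫⁻ y, c * v y ∂ν := by gcongr with y; exact hcol y
      _ = c * ∫⁻ x, v x ∂ν := lintegral_const_mul'' _ hv
  have hint : ∫⁻ x, v x ∂ν = 0 := by
    by_contra hne
    exact hcontract.not_gt (by simpa using ENNReal.mul_lt_mul_left hne hv' hc)
  have hvν : v =ᵐ[ν] 0 := (lintegral_eq_zero_iff' hv).1 hint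
  filter_upwards [h] with x hx
  have hzero : ∫⁻ y, k x y * v y ∂ν = 0 := by
    rw [lintegral_congr_ae (g := 0) (hvν.mono fun y hy => by simp [hy]), Pi.zero_def,
      lintegral_zero]
  exact nonpos_iff_eq_zero.1 (hx.trans_eq hzero)

lemma ae_le_inv_one_sub_mul_of_le_add_lintegral_mul {μ ν : Measure X} [SFinite ν] (hνμ : ν ≪ μ)
    {k : X → X → ℝ≥0∞} (hk : Measurable (Function.uncurry k)) {c : ℝ≥0∞} (hc : c < 1)
    (hrow : ∀ x, ∫⁻ y, k x y ∂ν ≤ c) (hcol : ∀ y, ∫⁻ x, k x y ∂ν ≤ c)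
    {u : X → ℝ≥0∞} (hu : AEMeasurable u ν) (hu' : ∫⁻ x, u x ∂ν ≠ ⊤) {G : ℝ≥0∞}
    (h : ∀ᵐ x ∂μ, u x ≤ G + ∫⁻ y, k x y * u y ∂ν) :
    ∀ᵐ x ∂μ, u x ≤ (1 - c)⁻¹ * G := by
  set M := (1 - c)⁻¹ * G with hM
  have hfix : G + c * M = M :=
    calc G + c * M = (1 - c) * M + c * M := by
          rw [hM, ← mul_assoc (1 - c), ENNReal.mul_inv_cancel (tsub_pos_of_lt hc).ne'
            (ENNReal.sub_ne_top one_ne_top), one_mul]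
      _ = M := by rw [← add_mul, tsub_add_cancel_of_le hc.le, one_mul]
  have hexcess : ∀ᵐ x ∂μ, u x - M ≤ ∫⁻ y, k x y * (u y - M) ∂ν := by
    filter_upwards [h] with x hx
    rw [tsub_le_iff_left]
    have hkx : Measurable (k x) := hk.of_uncurry_left
    calc u x ≤ G + ∫⁻ y, k x y * u y ∂ν := hx
      _ ≤ G + ∫⁻ y, (k x y * M + k x y * (u y - M)) ∂ν := by
          simp_rw [← mul_add]
          gcongr
          exact le_add_tsub
      _ = G + ((∫⁻ y, k x y ∂ν) * M + ∫⁻ y, k x y * (u y - M) ∂ν) := by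
          rw [lintegral_add_left (hkx.mul_const _), lintegral_mul_const _ hkx]
      _ ≤ G + (c * M + ∫⁻ y, k x y * (u y - M) ∂ν) := by gcongr; exact hrow x
      _ = M + ∫⁻ y, k x y * (u y - M) ∂ν := by rw [← add_assoc, hfix]
  filter_upwards [ae_eq_zero_of_le_lintegral_mul hνμ hk hc hcol (hu.sub_const M)
    (ne_top_of_le_ne_top hu' (lintegral_mono fun _ => tsub_le_self)) hexcess] with x hx
  exact tsub_eq_zero_iff_le.1 hx

end Absorption

section Splitting

variable {X E F : Type*} [MeasurableSpace X] [NormedAddCommGroup E] [NormedAddCommGroup F]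
  {μ : Measure X} {V : X → E} {φ : X → F} {S : Set X} {b : ℝ≥0∞}

lemma lintegral_enorm_mul_le_add_withDensity {h : X → ℝ≥0∞} (hV : AEStronglyMeasurable V μ)
    (hφ : AEStronglyMeasurable φ μ) (hh : AEMeasurable h μ) (hS : NullMeasurableSet S μ)
    (hVb : ∀ x ∈ S, ‖V x‖ₑ ≤ b) :
    ∫⁻ x, ‖V x‖ₑ * ‖φ x‖ₑ * h x ∂μ ≤ b * ∫⁻ x, ‖S.indicator φ x‖ₑ * h x ∂μ +
      ∫⁻ x, h x * ‖φ x‖ₑ ∂μ.withDensity (fun x => ‖Sᶜ.indicator V x‖ₑ) := by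
  have hφS : AEMeasurable (fun x => ‖S.indicator φ x‖ₑ * h x) μ := (hφ.indicator₀ hS).enorm.mul hh
  rw [lintegral_withDensity_eq_lintegral_mul₀ (hV.indicator₀ hS.compl).enorm
      (by fun_prop : AEMeasurable (fun x => h x * ‖φ x‖ₑ) μ),
    ← lintegral_const_mul'' _ hφS, ← lintegral_add_left' (hφS.const_mul _)]
  refine lintegral_mono fun x => ?_
  by_cases hx : x ∈ S
  · simpa [hx, mul_assoc] using mul_le_mul_left (hVb x hx) (‖φ x‖ₑ * h x)
  · simp [hx, mul_assoc, mul_comm (h x)]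

lemma lintegral_enorm_mul_le_lorentzOneNorm_add_withDensity {G : Type*} [NormedAddCommGroup G]
    {g : X → G} {p q : ℝ} (hpq : p.HolderConjugate q) (hV : AEStronglyMeasurable V μ)
    (hφ : AEStronglyMeasurable φ μ) (hg : AEStronglyMeasurable g μ) (hS : NullMeasurableSet S μ)
    (hVb : ∀ x ∈ S, ‖V x‖ₑ ≤ b) :
    ∫⁻ x, ‖V x‖ₑ * ‖φ x‖ₑ * ‖g x‖ₑ ∂μ ≤
      b * (ENNReal.ofReal p * weakLpNorm g q μ * lorentzOneNorm (S.indicator φ) p μ) +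
        ∫⁻ x, ‖g x‖ₑ * ‖φ x‖ₑ ∂μ.withDensity (fun x => ‖Sᶜ.indicator V x‖ₑ) := by
  refine (lintegral_enorm_mul_le_add_withDensity hV hφ hg.enorm hS hVb).trans ?_
  gcongr
  exact lintegral_enorm_mul_enorm_le_weakLpNorm_mul_lorentzOneNorm hpq (hφ.indicator₀ hS) hg

end Splitting

theorem resonance_essentially_bounded_general {X E F : Type*} [MeasurableSpace X]
    [NormedAddCommGroup E] [NormedAddCommGroup F] {μ : Measure X} [SFinite μ] {p q : ℝ}
    (hpq : p.HolderConjugate q) (hlt : p < q) {V : X → E} (hV : AEStronglyMeasurable V μ)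
    (hV' : lorentzOneNorm V p μ ≠ ⊤) {φ : X → F} (hφ : AEStronglyMeasurable φ μ)
    (hφ' : weakLpNorm φ q μ ≠ ⊤) {k : X → X → ℝ} (hk : Measurable (Function.uncurry k))
    {A : ℝ≥0∞} (hA : A ≠ ⊤) (hrow : ∀ x, weakLpNorm (k x) q μ ≤ A)
    (hcol : ∀ y, weakLpNorm (k · y) q μ ≤ A)
    (h : ∀ᵐ x ∂μ, ‖φ x‖ₑ ≤ ∫⁻ y, ‖V y‖ₑ * ‖φ y‖ₑ * ‖k x y‖ₑ ∂μ) :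
    ∃ C : ℝ, ∀ᵐ x ∂μ, ‖φ x‖ ≤ C := by
  have hpA : ENNReal.ofReal p * A ≠ ⊤ := ENNReal.mul_ne_top ofReal_ne_top hA
  obtain ⟨S, n, hS, hS', hVn, hVS⟩ := exists_lorentzOneNorm_indicator_compl_lt hpq.pos hV hV'
    (ENNReal.div_pos one_ne_zero hpA)
  have hVS' : AEStronglyMeasurable (Sᶜ.indicator V) μ := hV.indicator₀ hS.compl
  set c := ENNReal.ofReal p * A * lorentzOneNorm (Sᶜ.indicator V) p μ
  set ν := μ.withDensity fun x => ‖Sᶜ.indicator V x‖ₑ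
  set G := n * (ENNReal.ofReal p * A * lorentzOneNorm (S.indicator φ) p μ)
  have hc : c < 1 := ENNReal.mul_lt_of_lt_div' hVS
  have hνμ : ν ≪ μ := withDensity_absolutelyContinuous μ _
  have hG : (1 - c)⁻¹ * G ≠ ⊤ := ENNReal.mul_ne_top
    (ENNReal.inv_ne_top.2 (tsub_pos_of_lt hc).ne') <| ENNReal.mul_ne_top (natCast_ne_top n) <|
      ENNReal.mul_ne_top hpA (lorentzOneNorm_indicator_ne_top hpq.pos hlt hφ' hS')
  have hφν : ∫⁻ x, ‖φ x‖ₑ ∂ν ≠ ⊤ := ne_top_of_le_ne_top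
    (ENNReal.mul_ne_top (ENNReal.mul_ne_top ofReal_ne_top hφ') (hVS.trans_le le_top).ne)
    (lintegral_enorm_withDensity_enorm_le hpq hVS' hφ)
  have hkν {g : X → ℝ} (hg : Measurable g) (hgA : weakLpNorm g q μ ≤ A) :
      ∫⁻ y, ‖g y‖ₑ ∂ν ≤ c :=
    (lintegral_enorm_withDensity_enorm_le hpq hVS' hg.aestronglyMeasurable).trans
      (by simp only [c]; gcongr)
  have hdecomp : ∀ᵐ x ∂μ, ‖φ x‖ₑ ≤ G + ∫⁻ y, ‖k x y‖ₑ * ‖φ y‖ₑ ∂ν := by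
    filter_upwards [h] with x hx
    calc ‖φ x‖ₑ ≤ ∫⁻ y, ‖V y‖ₑ * ‖φ y‖ₑ * ‖k x y‖ₑ ∂μ := hx
      _ ≤ _ := lintegral_enorm_mul_le_lorentzOneNorm_add_withDensity hpq hV hφ
          (hk.of_uncurry_left (x := x)).aestronglyMeasurable hS hVn
      _ ≤ G + ∫⁻ y, ‖k x y‖ₑ * ‖φ y‖ₑ ∂ν := by
          simp only [G]
          gcongr
          exact hrow x
  refine ⟨((1 - c)⁻¹ * G).toReal, ?_⟩
  filter_upwards [ae_le_inv_one_sub_mul_of_le_add_lintegral_mul hνμ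
    (k := fun x y => ‖k x y‖ₑ) hk.enorm hc (fun x => hkν hk.of_uncurry_left (hrow x))
    (fun y => hkν hk.of_uncurry_right (hcol y))
    (hφ.enorm.mono_ac hνμ) hφν hdecomp] with x hx
  simpa using ENNReal.toReal_mono hG hx

lemma lorentzNorm321_eq_lorentzOneNorm {α : Type*} [NormedAddCommGroup α] (f : E3 → α) :
    lorentzNorm321 f = lorentzOneNorm f (3 / 2) volume := by
  simp only [lorentzNorm321, lorentzOneNorm, one_div_div]

lemma weakL3Norm_eq_weakLpNorm {α : Type*} [NormedAddCommGroup α] (f : E3 → α) :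
    weakL3Norm f = weakLpNorm f 3 volume :=
  rfl

lemma weakLpNorm_three_inv_norm_sub_le (x : E3) :
    weakLpNorm (fun y => ‖x - y‖⁻¹) 3 volume ≤ volume (Metric.ball (0 : E3) 1) ^ (1 / 3 : ℝ) := by
  simpa using weakLpNorm_inv_norm_sub_le volume x

lemma enorm_le_lintegral_of_eq_neg_inv_laplacian {V : E3 → ℝ} {φ : E3 → ℂ} {x : E3}
    (h : φ x = -(1 / (4 * (Real.pi : ℂ))) * ∫ y : E3, (V y : ℂ) * φ y / (‖x - y‖ : ℂ)) :
    ‖φ x‖ₑ ≤ ∫⁻ y, ‖V y‖ₑ * ‖φ y‖ₑ * ‖‖x - y‖⁻¹‖ₑ := by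
  have hconst : ‖-(1 / (4 * (Real.pi : ℂ)))‖ₑ ≤ 1 := by
    rw [← ofReal_norm, ENNReal.ofReal_le_one, norm_neg, norm_div, norm_mul, norm_one,
      Complex.norm_ofNat, Complex.norm_real, Real.norm_of_nonneg Real.pi_pos.le]
    exact div_le_one_of_le₀ (by linarith [Real.pi_gt_three]) (by positivity)
  calc ‖φ x‖ₑ ≤ 1 * ‖∫ y : E3, (V y : ℂ) * φ y / (‖x - y‖ : ℂ)‖ₑ := by
        rw [h, enorm_mul]
        gcongr
    _ ≤ ∫⁻ y : E3, ‖(V y : ℂ) * φ y / (‖x - y‖ : ℂ)‖ₑ := by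
        rw [one_mul]
        exact enorm_integral_le_lintegral_enorm _
    _ = ∫⁻ y, ‖V y‖ₑ * ‖φ y‖ₑ * ‖‖x - y‖⁻¹‖ₑ := by
        simp_rw [div_eq_mul_inv, enorm_mul, ← Complex.ofReal_inv, ← ofReal_norm, Complex.norm_real]

/-- Lemma 2.1, converse direction: a weak-`L³` solution of `φ = -R₀(0)Vφ` is essentially
bounded. -/
theorem resonance_essentially_bounded (V : E3 → ℝ) (hVmeas : Measurable V) (hV : MemL321 V)
    (φ : E3 → ℂ) (hφmeas : Measurable φ) (hφ : MemWeakL3 φ)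
    (heq : ∀ᵐ x : E3 ∂volume,
      Integrable (fun y : E3 => (V y : ℂ) * φ y / (‖x - y‖ : ℂ)) volume ∧
      φ x = -(1 / (4 * (Real.pi : ℂ))) * ∫ y : E3, (V y : ℂ) * φ y / (‖x - y‖ : ℂ)) :
    ∃ C : ℝ, ∀ᵐ x : E3 ∂volume, ‖φ x‖ ≤ C := by
  have hpq : (3 / 2 : ℝ).HolderConjugate 3 := Real.holderConjugate_iff.2 (by norm_num)
  have hball : volume (Metric.ball (0 : E3) 1) ^ (1 / 3 : ℝ) ≠ ⊤ :=
    ENNReal.rpow_ne_top_of_nonneg (by norm_num) measure_ball_lt_top.ne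
  exact resonance_essentially_bounded_general hpq (by norm_num) hVmeas.aestronglyMeasurable
    (lorentzNorm321_eq_lorentzOneNorm V ▸ hV.ne) hφmeas.aestronglyMeasurable
    (weakL3Norm_eq_weakLpNorm φ ▸ hφ.ne) (by fun_prop) hball weakLpNorm_three_inv_norm_sub_le
    (fun y => by simpa only [norm_sub_rev y] using weakLpNorm_three_inv_norm_sub_le y)
    (heq.mono fun x hx => enorm_le_lintegral_of_eq_neg_inv_laplacian hx.2)
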